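/- (Factorization D_2 = D_1 D_1^T) Let m ≥ 3 and k ≥ 1, and set c = m+2k. For the 2×2 operator matrix D_1 with entries D_1[1,1] = −R_k P_k^+, D_1[1,2] = 2T_k^* P_k^+/√(c(c−4)), D_1[2,1] = 2T_k P_k^−/(c−4), D_1[2,2] = √(c/(c−4)) Q_k P_k^−, and its transpose D_1^T (entries D_1^T[i,j] = D_1[j,i]), the product D_1 D_1^T equals the matrix operator D_2 with entries D_2[1,1] = R_k² P_k^+, D_2[1,2] = −2R_k T_k P_k^−/(c−4), D_2[2,1] = 2Q_k T_k^* P_k^+/(c−4), D_2[2,2] = (c/(c−4)) Q_k² P_k^−; i.e., for all smooth f_1 ∈ C^∞(ℝ^m, M_k) and f_2 ∈ C^∞(ℝ^m, uM_{k−1}), applying D_1 followed by D_1^T to the pair (f_1, f_2) componentwise gives the same pair of functions as applying D_2. -/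

import Mathlib

open scoped BigOperators

/-- The defining Clifford relations `e i * e j + e j * e i = -2 δ_{ij}` for the
generators of the real Clifford algebra `Cl_m`. -/
def CliffordRel {m : ℕ} {Cl : Type*} [Ring Cl] [Algebra ℝ Cl] (e : Fin m → Cl) : Prop :=
  ∀ i j : Fin m, e i * e j + e j * e i = algebraMap ℝ Cl (if i = j then -2 else 0)

/-- The embedding of `ℝ^m` into the Clifford algebra, `x ↦ ∑ j, x j • e j`. -/
def emb {m : ℕ} {Cl : Type*} [Ring Cl] [Algebra ℝ Cl] (e : Fin m → Cl)
    (x : Fin m → ℝ) : Cl :=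
  ∑ j, x j • e j

/-- The partial derivative `∂f/∂x_j`. -/
noncomputable def pd {m : ℕ} {E : Type*} [NormedAddCommGroup E] [NormedSpace ℝ E]
    (j : Fin m) (f : (Fin m → ℝ) → E) : (Fin m → ℝ) → E :=
  fun x => fderiv ℝ f x (Pi.single j 1)

/-- The Laplacian `Δ f = ∑ j, ∂²f/∂x_j²`. -/
noncomputable def lap {m : ℕ} {E : Type*} [NormedAddCommGroup E] [NormedSpace ℝ E]
    (f : (Fin m → ℝ) → E) : (Fin m → ℝ) → E :=
  fun x => ∑ j, pd j (pd j f) x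

/-- The Dirac operator `D f = ∑ j, e j * ∂f/∂x_j` (left Clifford multiplication). -/
noncomputable def dirac {m : ℕ} {Cl : Type*} [NormedRing Cl] [NormedAlgebra ℝ Cl]
    (e : Fin m → Cl) (f : (Fin m → ℝ) → Cl) : (Fin m → ℝ) → Cl :=
  fun x => ∑ j, e j * pd j f x

/-- `f : ℝ^m → E` is a (module-valued) polynomial homogeneous of degree `k`:
it lies in the real span of the monomial functions `x ↦ (∏ i, x i ^ α i) • c`
with total degree `∑ i, α i = k`. -/
def IsHomPoly {m : ℕ} {E : Type*} [AddCommGroup E] [Module ℝ E] (k : ℕ)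
    (f : (Fin m → ℝ) → E) : Prop :=
  f ∈ Submodule.span ℝ {g : (Fin m → ℝ) → E |
    ∃ (α : Fin m → ℕ) (c : E), (∑ i, α i) = k ∧ g = fun x => (∏ i, x i ^ α i) • c}

/-- Partial derivative `∂/∂x_j` of a function of two variables `(x, u)`. -/
noncomputable def pdx {m : ℕ} {E : Type*} [NormedAddCommGroup E] [NormedSpace ℝ E]
    (j : Fin m) (f : (Fin m → ℝ) → (Fin m → ℝ) → E) :
    (Fin m → ℝ) → (Fin m → ℝ) → E :=
  fun x u => fderiv ℝ (fun y => f y u) x (Pi.single j 1)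

/-- Partial derivative `∂/∂u_j` of a function of two variables `(x, u)`. -/
noncomputable def pdu {m : ℕ} {E : Type*} [NormedAddCommGroup E] [NormedSpace ℝ E]
    (j : Fin m) (f : (Fin m → ℝ) → (Fin m → ℝ) → E) :
    (Fin m → ℝ) → (Fin m → ℝ) → E :=
  fun x u => fderiv ℝ (fun v => f x v) u (Pi.single j 1)

/-- The Laplacian `Δ_x` in the variable `x`. -/
noncomputable def lapx {m : ℕ} {E : Type*} [NormedAddCommGroup E] [NormedSpace ℝ E]
    (f : (Fin m → ℝ) → (Fin m → ℝ) → E) : (Fin m → ℝ) → (Fin m → ℝ) → E :=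
  fun x u => ∑ j, pdx j (pdx j f) x u

/-- The mixed operator `⟨∇_u, ∇_x⟩ = ∑ j, ∂_{u_j} ∂_{x_j}`. -/
noncomputable def mixDer {m : ℕ} {E : Type*} [NormedAddCommGroup E] [NormedSpace ℝ E]
    (f : (Fin m → ℝ) → (Fin m → ℝ) → E) : (Fin m → ℝ) → (Fin m → ℝ) → E :=
  fun x u => ∑ j, pdu j (pdx j f) x u

/-- The Dirac operator `D_x = ∑ j, e j ∂_{x_j}` acting in the variable `x`. -/
noncomputable def diracx {m : ℕ} {Cl : Type*} [NormedRing Cl] [NormedAlgebra ℝ Cl]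
    (e : Fin m → Cl) (f : (Fin m → ℝ) → (Fin m → ℝ) → Cl) :
    (Fin m → ℝ) → (Fin m → ℝ) → Cl :=
  fun x u => ∑ j, e j * pdx j f x u

/-- The Dirac operator `D_u = ∑ j, e j ∂_{u_j}` acting in the variable `u`. -/
noncomputable def diracu {m : ℕ} {Cl : Type*} [NormedRing Cl] [NormedAlgebra ℝ Cl]
    (e : Fin m → Cl) (f : (Fin m → ℝ) → (Fin m → ℝ) → Cl) :
    (Fin m → ℝ) → (Fin m → ℝ) → Cl :=
  fun x u => ∑ j, e j * pdu j f x u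

/-- The bosonic Laplacian (higher spin Laplace operator)
`D_k = Δ_x − 4⟨u,∇_x⟩⟨∇_u,∇_x⟩/(m+2k−2) + 4|u|²⟨∇_u,∇_x⟩²/((m+2k−2)(m+2k−4))`. -/
noncomputable def bosonic {m : ℕ} (k : ℕ) {E : Type*} [NormedAddCommGroup E]
    [NormedSpace ℝ E] (f : (Fin m → ℝ) → (Fin m → ℝ) → E) :
    (Fin m → ℝ) → (Fin m → ℝ) → E :=
  fun x u =>
    lapx f x u
      - (4 / ((m : ℝ) + 2 * k - 2)) • ∑ s, u s • pdx s (mixDer f) x u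
      + (4 / (((m : ℝ) + 2 * k - 2) * ((m : ℝ) + 2 * k - 4))) •
          ((∑ i, u i ^ 2) • mixDer (mixDer f) x u)

/-- The projection `P_k^+ = I + u D_u/(m+2k−2)` acting in the variable `u`
(`u` acts by left Clifford multiplication). -/
noncomputable def PpU {m : ℕ} {Cl : Type*} [NormedRing Cl] [NormedAlgebra ℝ Cl]
    (e : Fin m → Cl) (k : ℕ) (f : (Fin m → ℝ) → (Fin m → ℝ) → Cl) :
    (Fin m → ℝ) → (Fin m → ℝ) → Cl :=
  fun x u => f x u + ((m : ℝ) + 2 * k - 2)⁻¹ • (emb e u * diracu e f x u)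

/-- The projection `P_k^- = −u D_u/(m+2k−2)` acting in the variable `u`. -/
noncomputable def PmU {m : ℕ} {Cl : Type*} [NormedRing Cl] [NormedAlgebra ℝ Cl]
    (e : Fin m → Cl) (k : ℕ) (f : (Fin m → ℝ) → (Fin m → ℝ) → Cl) :
    (Fin m → ℝ) → (Fin m → ℝ) → Cl :=
  fun x u => -(((m : ℝ) + 2 * k - 2)⁻¹ • (emb e u * diracu e f x u))

/-- `P_k^+ D_x`: this is the Rarita–Schwinger operator `R_k` on `C^∞(ℝ^m, M_k)` and the
twistor operator `T_k` on `C^∞(ℝ^m, uM_{k-1})`. -/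
noncomputable def PpDx {m : ℕ} {Cl : Type*} [NormedRing Cl] [NormedAlgebra ℝ Cl]
    (e : Fin m → Cl) (k : ℕ) (f : (Fin m → ℝ) → (Fin m → ℝ) → Cl) :
    (Fin m → ℝ) → (Fin m → ℝ) → Cl :=
  PpU e k (diracx e f)

/-- `P_k^- D_x`: this is the dual twistor operator `T_k^*` on `C^∞(ℝ^m, M_k)` and the
remaining operator `Q_k` on `C^∞(ℝ^m, uM_{k-1})`. -/
noncomputable def PmDx {m : ℕ} {Cl : Type*} [NormedRing Cl] [NormedAlgebra ℝ Cl]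
    (e : Fin m → Cl) (k : ℕ) (f : (Fin m → ℝ) → (Fin m → ℝ) → Cl) :
    (Fin m → ℝ) → (Fin m → ℝ) → Cl :=
  PmU e k (diracx e f)

/-- First component of the matrix operator `D₁` applied to the pair `(g₁, g₂)`:
`D₁[1,1] g₁ + D₁[1,2] g₂ = −R_k P_k^+ g₁ + (2/√(c(c−4))) T_k^* P_k^+ g₂`, `c = m+2k`. -/
noncomputable def D1fst {m : ℕ} {Cl : Type*} [NormedRing Cl] [NormedAlgebra ℝ Cl]
    (e : Fin m → Cl) (k : ℕ) (g₁ g₂ : (Fin m → ℝ) → (Fin m → ℝ) → Cl) :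
    (Fin m → ℝ) → (Fin m → ℝ) → Cl :=
  fun x u => -(PpDx e k (PpU e k g₁) x u)
    + (2 / Real.sqrt (((m : ℝ) + 2 * k) * ((m : ℝ) + 2 * k - 4))) •
        PmDx e k (PpU e k g₂) x u

/-- Second component of the matrix operator `D₁` applied to `(g₁, g₂)`:
`D₁[2,1] g₁ + D₁[2,2] g₂ = (2/(c−4)) T_k P_k^- g₁ + √(c/(c−4)) Q_k P_k^- g₂`. -/
noncomputable def D1snd {m : ℕ} {Cl : Type*} [NormedRing Cl] [NormedAlgebra ℝ Cl]
    (e : Fin m → Cl) (k : ℕ) (g₁ g₂ : (Fin m → ℝ) → (Fin m → ℝ) → Cl) :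
    (Fin m → ℝ) → (Fin m → ℝ) → Cl :=
  fun x u => (2 / ((m : ℝ) + 2 * k - 4)) • PpDx e k (PmU e k g₁) x u
    + Real.sqrt (((m : ℝ) + 2 * k) / ((m : ℝ) + 2 * k - 4)) •
        PmDx e k (PmU e k g₂) x u

/-- First component of the transposed matrix operator `D₁ᵀ` (entries `D₁ᵀ[i,j] = D₁[j,i]`)
applied to `(g₁, g₂)`: `D₁[1,1] g₁ + D₁[2,1] g₂`. -/
noncomputable def D1Tfst {m : ℕ} {Cl : Type*} [NormedRing Cl] [NormedAlgebra ℝ Cl]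
    (e : Fin m → Cl) (k : ℕ) (g₁ g₂ : (Fin m → ℝ) → (Fin m → ℝ) → Cl) :
    (Fin m → ℝ) → (Fin m → ℝ) → Cl :=
  fun x u => -(PpDx e k (PpU e k g₁) x u)
    + (2 / ((m : ℝ) + 2 * k - 4)) • PpDx e k (PmU e k g₂) x u

/-- Second component of the transposed matrix operator `D₁ᵀ` applied to `(g₁, g₂)`:
`D₁[1,2] g₁ + D₁[2,2] g₂`. -/
noncomputable def D1Tsnd {m : ℕ} {Cl : Type*} [NormedRing Cl] [NormedAlgebra ℝ Cl]
    (e : Fin m → Cl) (k : ℕ) (g₁ g₂ : (Fin m → ℝ) → (Fin m → ℝ) → Cl) :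
    (Fin m → ℝ) → (Fin m → ℝ) → Cl :=
  fun x u => (2 / Real.sqrt (((m : ℝ) + 2 * k) * ((m : ℝ) + 2 * k - 4))) •
      PmDx e k (PpU e k g₁) x u
    + Real.sqrt (((m : ℝ) + 2 * k) / ((m : ℝ) + 2 * k - 4)) •
        PmDx e k (PmU e k g₂) x u

/-- First component of the matrix operator `D₂` applied to `(g₁, g₂)`:
`R_k² P_k^+ g₁ − (2/(c−4)) R_k T_k P_k^- g₂`. -/
noncomputable def D2fst {m : ℕ} {Cl : Type*} [NormedRing Cl] [NormedAlgebra ℝ Cl]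
    (e : Fin m → Cl) (k : ℕ) (g₁ g₂ : (Fin m → ℝ) → (Fin m → ℝ) → Cl) :
    (Fin m → ℝ) → (Fin m → ℝ) → Cl :=
  fun x u => PpDx e k (PpDx e k (PpU e k g₁)) x u
    - (2 / ((m : ℝ) + 2 * k - 4)) • PpDx e k (PpDx e k (PmU e k g₂)) x u

/-- Second component of the matrix operator `D₂` applied to `(g₁, g₂)`:
`(2/(c−4)) Q_k T_k^* P_k^+ g₁ + (c/(c−4)) Q_k² P_k^- g₂`. -/
noncomputable def D2snd {m : ℕ} {Cl : Type*} [NormedRing Cl] [NormedAlgebra ℝ Cl]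
    (e : Fin m → Cl) (k : ℕ) (g₁ g₂ : (Fin m → ℝ) → (Fin m → ℝ) → Cl) :
    (Fin m → ℝ) → (Fin m → ℝ) → Cl :=
  fun x u => (2 / ((m : ℝ) + 2 * k - 4)) • PmDx e k (PmDx e k (PpU e k g₁)) x u
    + (((m : ℝ) + 2 * k) / ((m : ℝ) + 2 * k - 4)) • PmDx e k (PmDx e k (PmU e k g₂)) x u

/-
The vector variable `u`, the Dirac operator `D_u`, the Euler operator and the Laplacian satisfy the
relations of `osp(1|2)`, which follow from those of the Clifford–Weyl algebra generated by the
`e_j`, `u_j` and `∂/∂u_j`. They show that `u D_u` preserves `H_k` and that on it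
`(u D_u)² = -(m + 2k - 2) u D_u`, so `P_k^-` is idempotent. Since `D_x` commutes with the Euler
operator and the Laplacian in `u`, it preserves the fields with values in `H_k`. The factorization
becomes an identity of 2×2 matrices over the ring of endomorphisms of `C^∞(ℝ^m, H_k)`, valid for
any idempotent in place of `P_k^-` and any element in place of `D_x`. The coefficients match
because `2/√(c(c-4)) · √(c/(c-4)) = 2/(c-4)`.
-/

open scoped ContDiff

theorem commute_dotProduct {ι A : Type*} [Fintype ι] [NonUnitalSemiring A] {a : A} {b c : ι → A}
    (hb : ∀ i, Commute a (b i)) (hc : ∀ i, Commute a (c i)) : Commute a (b ⬝ᵥ c) :=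
  .sum_right _ _ _ fun i _ => (hb i).mul_right (hc i)

/-- The relations of the Clifford–Weyl algebra on an index set `ι`: Clifford generators `e`,
commuting coordinates `x`, commuting derivatives `d`, with `[d i, x j] = δ i j`. With `⬝ᵥ`, the
element `e ⬝ᵥ d` is the Dirac operator, `e ⬝ᵥ x` the vector variable, `x ⬝ᵥ d` the Euler operator
and `d ⬝ᵥ d` the Laplacian. -/
structure IsCliffordWeyl {ι A : Type*} [DecidableEq ι] [Ring A] (e x d : ι → A) : Prop where
  sq_clifford (i : ι) : e i * e i = -1
  clifford_anticomm (i j : ι) (h : i ≠ j) : e i * e j + e j * e i = 0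
  comm_clifford_coord (i j : ι) : Commute (e i) (x j)
  comm_clifford_deriv (i j : ι) : Commute (e i) (d j)
  comm_coord (i j : ι) : Commute (x i) (x j)
  comm_deriv (i j : ι) : Commute (d i) (d j)
  deriv_mul_coord (i j : ι) : d i * x j = x j * d i + if i = j then 1 else 0

namespace IsCliffordWeyl

section Ring

variable {ι A : Type*} [DecidableEq ι] [Ring A] {e x d : ι → A}

theorem clifford_mul_add_mul (h : IsCliffordWeyl e x d) (i j : ι) :
    e i * e j + e j * e i = if i = j then -2 else 0 := by
  split_ifs with hij
  · rw [hij, h.sq_clifford]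
    norm_num
  · exact h.clifford_anticomm i j hij

variable [Fintype ι]

theorem sum_clifford_mul_of_symm (h : IsCliffordWeyl e x d) {s : ι → ι → A}
    (hs : ∀ i j, s i j = s j i) :
    ∑ i, ∑ j, e i * e j * s i j = -∑ i, s i i := by
  suffices ∑ p : ι × ι, (e p.1 * e p.2 * s p.1 p.2 + if p.1 = p.2 then s p.1 p.2 else 0) = 0 by
    rw [eq_neg_iff_add_eq_zero, ← this, Fintype.sum_prod_type]
    simp [Finset.sum_add_distrib]
  refine Finset.sum_involution (fun p _ => p.swap) ?_ ?_ (fun _ _ => Finset.mem_univ _)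
    (fun _ _ => Prod.swap_swap _)
  · rintro ⟨i, j⟩ -
    by_cases hij : i = j
    · simp [hij, h.sq_clifford]
    · simp only [Prod.fst_swap, Prod.snd_swap, hij, Ne.symm hij, if_false, add_zero, hs j i,
        ← add_mul, h.clifford_anticomm i j hij, zero_mul]
  · rintro ⟨i, j⟩ - hne hij
    obtain rfl : j = i := congrArg Prod.fst hij
    simp [h.sq_clifford] at hne

theorem dirac_mul_dirac (h : IsCliffordWeyl e x d) : e ⬝ᵥ d * e ⬝ᵥ d = -(d ⬝ᵥ d) := by
  rw [dotProduct, Finset.sum_mul_sum, dotProduct,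
    ← h.sum_clifford_mul_of_symm (s := fun i j => d i * d j) fun i j => h.comm_deriv i j]
  refine Finset.sum_congr rfl fun i _ => Finset.sum_congr rfl fun j _ => ?_
  simp only [mul_assoc, (h.comm_clifford_deriv j i).left_comm]

theorem dirac_mul_vector (h : IsCliffordWeyl e x d) :
    e ⬝ᵥ d * e ⬝ᵥ x = -(e ⬝ᵥ x * e ⬝ᵥ d) - 2 * (x ⬝ᵥ d) - Fintype.card ι := by
  have key (i j : ι) : e i * d i * (e j * x j) + e j * x j * (e i * d i)
      = if i = j then -2 * (x i * d i) - 1 else 0 := calc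
    e i * d i * (e j * x j) + e j * x j * (e i * d i)
      = e i * e j * (d i * x j) + e j * e i * (x j * d i) := by
        simp only [mul_assoc, (h.comm_clifford_deriv j i).left_comm,
          (h.comm_clifford_coord i j).left_comm]
    _ = (e i * e j + e j * e i) * (x j * d i) + e i * e j * (if i = j then 1 else 0) := by
        rw [h.deriv_mul_coord]
        noncomm_ring
    _ = _ := by
        rw [h.clifford_mul_add_mul]
        split_ifs with hij
        · rw [hij, h.sq_clifford, mul_one, sub_eq_add_neg]
        · simp
  have hsum : e ⬝ᵥ d * e ⬝ᵥ x + e ⬝ᵥ x * e ⬝ᵥ d = -2 * (x ⬝ᵥ d) - Fintype.card ι := by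
    simp only [dotProduct, Finset.sum_mul_sum]
    rw [Finset.sum_comm (f := fun i j => e i * x i * (e j * d j))]
    simp [← Finset.sum_add_distrib, key, Finset.mul_sum]
  rw [eq_sub_of_add_eq hsum, neg_mul]
  abel

theorem deriv_mul_euler (h : IsCliffordWeyl e x d) (i : ι) :
    d i * x ⬝ᵥ d = x ⬝ᵥ d * d i + d i := by
  simp only [dotProduct, Finset.mul_sum, ← mul_assoc, h.deriv_mul_coord, add_mul,
    Finset.sum_add_distrib, Finset.sum_mul]
  simp [mul_assoc, (h.comm_deriv i _).eq]

theorem euler_mul_coord (h : IsCliffordWeyl e x d) (i : ι) :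
    x ⬝ᵥ d * x i = x i * x ⬝ᵥ d + x i := by
  simp only [dotProduct, Finset.sum_mul, mul_assoc, h.deriv_mul_coord, mul_add,
    Finset.sum_add_distrib, Finset.mul_sum, (h.comm_coord _ i).left_comm]
  simp

theorem commute_clifford_euler (h : IsCliffordWeyl e x d) (i : ι) : Commute (e i) (x ⬝ᵥ d) :=
  commute_dotProduct (h.comm_clifford_coord i) (h.comm_clifford_deriv i)

theorem dirac_mul_euler (h : IsCliffordWeyl e x d) :
    e ⬝ᵥ d * x ⬝ᵥ d = x ⬝ᵥ d * e ⬝ᵥ d + e ⬝ᵥ d := by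
  rw [dotProduct, Finset.sum_mul, Finset.mul_sum, ← Finset.sum_add_distrib]
  refine Finset.sum_congr rfl fun i _ => ?_
  rw [mul_assoc, h.deriv_mul_euler, mul_add, (h.commute_clifford_euler i).left_comm]

theorem euler_mul_vector (h : IsCliffordWeyl e x d) :
    x ⬝ᵥ d * e ⬝ᵥ x = e ⬝ᵥ x * x ⬝ᵥ d + e ⬝ᵥ x := by
  rw [dotProduct.eq_1 e x, Finset.mul_sum, Finset.sum_mul, ← Finset.sum_add_distrib]
  refine Finset.sum_congr rfl fun i _ => ?_
  rw [← (h.commute_clifford_euler i).left_comm, h.euler_mul_coord, mul_add, mul_assoc]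

theorem commute_euler_vector_mul_dirac (h : IsCliffordWeyl e x d) :
    Commute (x ⬝ᵥ d) (e ⬝ᵥ x * e ⬝ᵥ d) := by
  rw [commute_iff_eq, ← mul_assoc, h.euler_mul_vector, mul_assoc, h.dirac_mul_euler]
  noncomm_ring

theorem laplacian_mul_vector (h : IsCliffordWeyl e x d) :
    d ⬝ᵥ d * e ⬝ᵥ x = e ⬝ᵥ x * d ⬝ᵥ d + 2 * e ⬝ᵥ d := by
  have hΔ : d ⬝ᵥ d = -(e ⬝ᵥ d * e ⬝ᵥ d) := by rw [h.dirac_mul_dirac, neg_neg]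
  calc d ⬝ᵥ d * e ⬝ᵥ x
      = -(e ⬝ᵥ d * (e ⬝ᵥ d * e ⬝ᵥ x)) := by rw [hΔ, neg_mul, mul_assoc]
    _ = e ⬝ᵥ d * (e ⬝ᵥ x * e ⬝ᵥ d) + 2 * (e ⬝ᵥ d * x ⬝ᵥ d)
          + (Fintype.card ι : A) * e ⬝ᵥ d := by
        rw [h.dirac_mul_vector, Nat.cast_comm]
        noncomm_ring
    _ = -(e ⬝ᵥ x * (e ⬝ᵥ d * e ⬝ᵥ d)) + 2 * e ⬝ᵥ d := by
        rw [← mul_assoc, h.dirac_mul_vector, h.dirac_mul_euler]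
        noncomm_ring
    _ = e ⬝ᵥ x * d ⬝ᵥ d + 2 * e ⬝ᵥ d := by rw [hΔ, mul_neg]

theorem laplacian_mul_vector_mul_dirac (h : IsCliffordWeyl e x d) :
    d ⬝ᵥ d * (e ⬝ᵥ x * e ⬝ᵥ d) = (e ⬝ᵥ x * e ⬝ᵥ d - 2) * d ⬝ᵥ d := by
  have hD : e ⬝ᵥ d * e ⬝ᵥ d = -(d ⬝ᵥ d) := h.dirac_mul_dirac
  have hcomm : d ⬝ᵥ d * e ⬝ᵥ d = e ⬝ᵥ d * d ⬝ᵥ d := by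
    rw [← neg_inj, ← neg_mul, ← mul_neg, ← hD, mul_assoc]
  rw [← mul_assoc, h.laplacian_mul_vector, add_mul, mul_assoc, hcomm, mul_assoc 2, hD]
  noncomm_ring

theorem vector_mul_dirac_sq (h : IsCliffordWeyl e x d) :
    e ⬝ᵥ x * e ⬝ᵥ d * (e ⬝ᵥ x * e ⬝ᵥ d)
      = e ⬝ᵥ x * e ⬝ᵥ x * d ⬝ᵥ d - e ⬝ᵥ x * e ⬝ᵥ d * (Fintype.card ι + 2 * x ⬝ᵥ d - 2) := calc
    _ = e ⬝ᵥ x * (e ⬝ᵥ d * e ⬝ᵥ x) * e ⬝ᵥ d := by noncomm_ring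
    _ = -(e ⬝ᵥ x * e ⬝ᵥ x * (e ⬝ᵥ d * e ⬝ᵥ d)) - 2 * (e ⬝ᵥ x * (x ⬝ᵥ d * e ⬝ᵥ d))
          - e ⬝ᵥ x * ((Fintype.card ι : A) * e ⬝ᵥ d) := by
        rw [h.dirac_mul_vector]
        noncomm_ring
    _ = _ := by
        rw [h.dirac_mul_dirac, eq_sub_of_add_eq h.dirac_mul_euler.symm, Nat.cast_comm]
        noncomm_ring

end Ring

section Module

variable {ι K S : Type*} [Fintype ι] [Field K] [AddCommGroup S] [Module K S]
  {e x d : ι → Module.End K S}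

/-- The solid harmonics of degree `κ`: the space `H_κ` on which the Euler operator `x ⬝ᵥ d` is
multiplication by `κ` and the Laplacian `d ⬝ᵥ d` vanishes. -/
def harmonics (x d : ι → Module.End K S) (κ : K) : Submodule K S :=
  Module.End.eigenspace (x ⬝ᵥ d) κ ⊓ LinearMap.ker (d ⬝ᵥ d)

theorem mem_harmonics {κ : K} {f : S} :
    f ∈ harmonics x d κ ↔ (x ⬝ᵥ d) f = κ • f ∧ (d ⬝ᵥ d) f = 0 := by
  rw [harmonics, Submodule.mem_inf, Module.End.mem_eigenspace_iff, LinearMap.mem_ker]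

theorem apply_mem_harmonics {T L : Module.End K S} {κ : K} (hE : Commute (x ⬝ᵥ d) T)
    (hΔ : d ⬝ᵥ d * T = L * d ⬝ᵥ d) {f : S} (hf : f ∈ harmonics x d κ) :
    T f ∈ harmonics x d κ := by
  rw [mem_harmonics] at hf ⊢
  constructor
  · rw [← Module.End.mul_apply, hE.eq, Module.End.mul_apply, hf.1, map_smul]
  · rw [← Module.End.mul_apply, hΔ, Module.End.mul_apply, hf.2, map_zero]

variable [DecidableEq ι]

theorem vector_mul_dirac_apply_mem_harmonics (h : IsCliffordWeyl e x d) {κ : K} :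
    ∀ f ∈ harmonics x d κ, (e ⬝ᵥ x * e ⬝ᵥ d) f ∈ harmonics x d κ := fun _ =>
  apply_mem_harmonics h.commute_euler_vector_mul_dirac h.laplacian_mul_vector_mul_dirac

theorem vector_mul_dirac_sq_apply (h : IsCliffordWeyl e x d) {κ : K} {f : S}
    (hf : f ∈ harmonics x d κ) :
    (e ⬝ᵥ x * e ⬝ᵥ d) ((e ⬝ᵥ x * e ⬝ᵥ d) f)
      = -(Fintype.card ι + 2 * κ - 2 : K) • (e ⬝ᵥ x * e ⬝ᵥ d) f := by
  obtain ⟨hE, hΔ⟩ := mem_harmonics.mp hf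
  have hnat (n : ℕ) (g : S) : (n : Module.End K S) g = (n : K) • g := by
    rw [Module.End.natCast_apply, Nat.cast_smul_eq_nsmul]
  have hN : (Fintype.card ι + 2 * x ⬝ᵥ d - 2) f = (Fintype.card ι + 2 * κ - 2 : K) • f := by
    rw [← Nat.cast_ofNat (R := Module.End K S), LinearMap.sub_apply, LinearMap.add_apply,
      Module.End.mul_apply, hnat, hnat, hnat, hE, Nat.cast_ofNat]
    module
  calc (e ⬝ᵥ x * e ⬝ᵥ d) ((e ⬝ᵥ x * e ⬝ᵥ d) f)
      = (e ⬝ᵥ x * e ⬝ᵥ x) ((d ⬝ᵥ d) f)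
          - (e ⬝ᵥ x * e ⬝ᵥ d) ((Fintype.card ι + 2 * x ⬝ᵥ d - 2) f) :=
        LinearMap.congr_fun h.vector_mul_dirac_sq f
    _ = -(Fintype.card ι + 2 * κ - 2 : K) • (e ⬝ᵥ x * e ⬝ᵥ d) f := by
        rw [hΔ, hN, map_zero, map_smul, zero_sub, neg_smul]

/-- The projection `P_κ^- = -u D_u / (m + 2κ - 2)` as an endomorphism of the harmonics of degree
`κ`, for `m` the number of variables. -/
def projMinus (h : IsCliffordWeyl e x d) (κ : K) : Module.End K (harmonics x d κ) :=
  -(Fintype.card ι + 2 * κ - 2)⁻¹ •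
    (e ⬝ᵥ x * e ⬝ᵥ d).restrict h.vector_mul_dirac_apply_mem_harmonics

theorem isIdempotentElem_projMinus (h : IsCliffordWeyl e x d) {κ : K}
    (hκ : (Fintype.card ι + 2 * κ - 2 : K) ≠ 0) : IsIdempotentElem (h.projMinus κ) := by
  have hsq : (e ⬝ᵥ x * e ⬝ᵥ d).restrict (h.vector_mul_dirac_apply_mem_harmonics (κ := κ))
        * (e ⬝ᵥ x * e ⬝ᵥ d).restrict h.vector_mul_dirac_apply_mem_harmonics
      = -(Fintype.card ι + 2 * κ - 2 : K) •
        (e ⬝ᵥ x * e ⬝ᵥ d).restrict h.vector_mul_dirac_apply_mem_harmonics :=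
    LinearMap.ext fun f => Subtype.ext (h.vector_mul_dirac_sq_apply f.2)
  rw [IsIdempotentElem, projMinus, smul_mul_smul_comm, hsq, smul_smul]
  congr 1
  field_simp

end Module

end IsCliffordWeyl

section OperatorMatrices

variable {A : Type*} [Ring A] [Algebra ℝ A]

/-- The matrix `D₁` for `c = m + 2k`, built from a projection `q = P_k^-`, with complement
`1 - q = P_k^+`, and the Dirac operator `T = D_x`. -/
noncomputable def firstOrderMatrix (c : ℝ) (q T : A) : Matrix (Fin 2) (Fin 2) A :=
  !![-((1 - q) * T * (1 - q)), (2 / √(c * (c - 4))) • (q * T * (1 - q));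
    (2 / (c - 4)) • ((1 - q) * T * q), √(c / (c - 4)) • (q * T * q)]

/-- The matrix `D₂` for `c = m + 2k`, built from a projection `q = P_k^-`, with complement
`1 - q = P_k^+`, and the Dirac operator `T = D_x`. -/
noncomputable def secondOrderMatrix (c : ℝ) (q T : A) : Matrix (Fin 2) (Fin 2) A :=
  !![(1 - q) * T * ((1 - q) * T) * (1 - q), -(2 / (c - 4)) • ((1 - q) * T * ((1 - q) * T) * q);
    (2 / (c - 4)) • (q * T * (q * T) * (1 - q)), (c / (c - 4)) • (q * T * (q * T) * q)]

theorem firstOrderMatrix_mul_transpose {c : ℝ} (hc : 4 < c) {q : A} (hq : IsIdempotentElem q)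
    (T : A) :
    firstOrderMatrix c q T * (firstOrderMatrix c q T).transpose = secondOrderMatrix c q T := by
  have hsqrt : √(c / (c - 4)) * √(c / (c - 4)) = c / (c - 4) :=
    Real.mul_self_sqrt (div_nonneg (by linarith) (by linarith))
  have hcross : 2 / √(c * (c - 4)) * √(c / (c - 4)) = 2 / (c - 4) := by
    have h0 : 0 < √c := Real.sqrt_pos.2 (by linarith)
    calc 2 / √(c * (c - 4)) * √(c / (c - 4)) = 2 / (√c * √(c - 4)) * (√c / √(c - 4)) := by
          rw [Real.sqrt_mul (by linarith), Real.sqrt_div (by linarith)]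
      _ = √c * 2 / (√c * (√(c - 4) * √(c - 4))) := by ring
      _ = 2 / (√(c - 4) * √(c - 4)) := mul_div_mul_left _ _ h0.ne'
      _ = 2 / (c - 4) := by rw [Real.mul_self_sqrt (by linarith)]
  have hpp (a : A) : (1 - q) * ((1 - q) * a) = (1 - q) * a := by rw [← mul_assoc, hq.one_sub]
  have hqq (a : A) : q * (q * a) = q * a := by rw [← mul_assoc, hq]
  have hpq (a : A) : (1 - q) * (q * a) = 0 := by rw [← mul_assoc, hq.one_sub_mul_self, zero_mul]
  have hqp (a : A) : q * ((1 - q) * a) = 0 := by rw [← mul_assoc, hq.mul_one_sub_self, zero_mul]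
  rw [firstOrderMatrix, secondOrderMatrix]
  generalize 1 - q = p at *
  ext i j
  fin_cases i <;> fin_cases j <;>
    simp [Matrix.mul_apply, Fin.sum_univ_two, mul_assoc, smul_smul, hqq, hpp, hpq, hqp, hsqrt,
      hcross]

open scoped Matrix.Module in
theorem firstOrderMatrix_smul_transpose_smul {S : Type*} [AddCommGroup S] [Module A S] {c : ℝ}
    (hc : 4 < c) {q : A} (hq : IsIdempotentElem q) (T : A) (v : Fin 2 → S) :
    firstOrderMatrix c q T • (firstOrderMatrix c q T).transpose • v
      = secondOrderMatrix c q T • v := by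
  rw [← mul_smul, firstOrderMatrix_mul_transpose hc hq]

end OperatorMatrices

theorem CliffordRel.mul_self {m : ℕ} {A : Type*} [Ring A] [Algebra ℝ A] {e : Fin m → A}
    (he : CliffordRel e) (j : Fin m) : e j * e j = -1 := by
  have h : (2 : ℝ) • (e j * e j) = (2 : ℝ) • (-1) := by
    rw [two_smul, he j j, if_pos rfl, Algebra.algebraMap_eq_smul_one, neg_smul, smul_neg]
  exact smul_right_injective A two_ne_zero h

section SmoothMaps

variable {V F A : Type*} [NormedAddCommGroup V] [NormedSpace ℝ V]
  [NormedAddCommGroup F] [NormedSpace ℝ F] [NormedRing A] [NormedAlgebra ℝ A]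

/-- The space `C^∞(V, F)`. -/
def smoothMaps (V F : Type*) [NormedAddCommGroup V] [NormedSpace ℝ V]
    [NormedAddCommGroup F] [NormedSpace ℝ F] : Submodule ℝ (V → F) where
  carrier := {f | ContDiff ℝ ∞ f}
  add_mem' {f g} (hf : ContDiff ℝ ∞ f) (hg : ContDiff ℝ ∞ g) := (hf.add hg : ContDiff ℝ ∞ (f + g))
  zero_mem' := (contDiff_const : ContDiff ℝ ∞ (0 : V → F))
  smul_mem' c f (hf : ContDiff ℝ ∞ f) := (hf.const_smul c : ContDiff ℝ ∞ (c • f))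

namespace smoothMaps

theorem contDiff_coe (f : smoothMaps V F) : ContDiff ℝ ∞ (f : V → F) := f.2

theorem differentiable_coe (f : smoothMaps V F) : Differentiable ℝ (f : V → F) :=
  (contDiff_coe f).differentiable (by simp)

theorem contDiff_fderiv_coe (f : smoothMaps V F) : ContDiff ℝ ∞ (fderiv ℝ (f : V → F)) :=
  (contDiff_coe f).fderiv_right (by simp)

/-- Left multiplication by the constant `a` on `C^∞(V, A)`. -/
def constMul (a : A) : Module.End ℝ (smoothMaps V A) where
  toFun f := ⟨fun p => a * (f : V → A) p, contDiff_const.mul (contDiff_coe f)⟩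
  map_add' _ _ := Subtype.ext <| funext fun _ => mul_add a _ _
  map_smul' c _ := Subtype.ext <| funext fun _ => mul_smul_comm c a _

/-- Multiplication by the linear functional `ℓ` on `C^∞(V, F)`. -/
def coordMul (ℓ : V →L[ℝ] ℝ) : Module.End ℝ (smoothMaps V F) where
  toFun f := ⟨fun p => ℓ p • (f : V → F) p, ℓ.contDiff.smul (contDiff_coe f)⟩
  map_add' _ _ := Subtype.ext <| funext fun p => smul_add (ℓ p) _ _
  map_smul' c _ := Subtype.ext <| funext fun p => smul_comm (ℓ p) c _

/-- The directional derivative along `v` on `C^∞(V, F)`. -/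
noncomputable def dirDeriv (v : V) : Module.End ℝ (smoothMaps V F) where
  toFun f := ⟨fun p => fderiv ℝ (f : V → F) p v, (contDiff_fderiv_coe f).clm_apply contDiff_const⟩
  map_add' f g := Subtype.ext <| funext fun p => by
    simp [fderiv_add (differentiable_coe f p) (differentiable_coe g p)]
  map_smul' c f := Subtype.ext <| funext fun p => by
    simp [fderiv_const_smul (differentiable_coe f p)]

theorem constMul_apply (a : A) (f : smoothMaps V A) (p : V) :
    (constMul a f : V → A) p = a * (f : V → A) p := rfl

theorem coordMul_apply (ℓ : V →L[ℝ] ℝ) (f : smoothMaps V F) (p : V) :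
    (coordMul ℓ f : V → F) p = ℓ p • (f : V → F) p := rfl

theorem commute_constMul_coordMul (a : A) (ℓ : V →L[ℝ] ℝ) :
    Commute (constMul a) (coordMul (F := A) ℓ) :=
  LinearMap.ext fun _ => Subtype.ext <| funext fun p => mul_smul_comm (ℓ p) a _

theorem commute_constMul_dirDeriv (a : A) (v : V) :
    Commute (constMul a) (dirDeriv (F := A) v) :=
  LinearMap.ext fun f => Subtype.ext <| funext fun p => by
    have h : fderiv ℝ (fun q => a * (f : V → A) q) p v = a * fderiv ℝ (f : V → A) p v := by
      rw [fderiv_const_mul (differentiable_coe f p)]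
      rfl
    exact h.symm

theorem commute_coordMul (ℓ ℓ' : V →L[ℝ] ℝ) :
    Commute (coordMul (F := F) ℓ) (coordMul ℓ') :=
  LinearMap.ext fun _ => Subtype.ext <| funext fun p => smul_comm (ℓ p) (ℓ' p) _

theorem commute_dirDeriv (v w : V) : Commute (dirDeriv (F := F) v) (dirDeriv w) := by
  refine LinearMap.ext fun f => Subtype.ext <| funext fun p => ?_
  have hd : DifferentiableAt ℝ (fderiv ℝ (f : V → F)) p :=
    (contDiff_fderiv_coe f).differentiable (by simp) p
  have hsymm : IsSymmSndFDerivAt ℝ (f : V → F) p :=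
    ((contDiff_coe f).contDiffAt).isSymmSndFDerivAt (by
      simpa using (WithTop.coe_le_coe.2 le_top : ((2 : ℕ∞) : WithTop ℕ∞) ≤ ∞))
  have hvw (v w : V) : fderiv ℝ (fun q => fderiv ℝ (f : V → F) q w) p v
      = fderiv ℝ (fderiv ℝ (f : V → F)) p v w := by
    rw [fderiv_clm_apply hd (differentiableAt_const w)]
    simp
  exact (hvw v w).trans ((hsymm v w).trans (hvw w v).symm)

theorem dirDeriv_mul_coordMul (v : V) (ℓ : V →L[ℝ] ℝ) :
    dirDeriv (F := F) v * coordMul ℓ = coordMul ℓ * dirDeriv v + ℓ v • 1 := by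
  refine LinearMap.ext fun f => Subtype.ext <| funext fun p => ?_
  have h : fderiv ℝ (fun q => ℓ q • (f : V → F) q) p v
      = ℓ p • fderiv ℝ (f : V → F) p v + ℓ v • (f : V → F) p := by
    rw [fderiv_fun_smul ℓ.differentiableAt (differentiable_coe f p)]
    simp
  exact h

theorem commute_coordMul_dirDeriv {v : V} {ℓ : V →L[ℝ] ℝ} (h : ℓ v = 0) :
    Commute (coordMul (F := F) ℓ) (dirDeriv v) := by
  rw [commute_iff_eq, dirDeriv_mul_coordMul, h, zero_smul, add_zero]

theorem isCliffordWeyl {m : ℕ} {e : Fin m → A} (he : CliffordRel e) {ℓ : Fin m → V →L[ℝ] ℝ}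
    {v : Fin m → V} (hℓ : ∀ i j, ℓ j (v i) = if i = j then 1 else 0) :
    IsCliffordWeyl (constMul (V := V) ∘ e) (coordMul ∘ ℓ) (dirDeriv ∘ v) where
  sq_clifford i := LinearMap.ext fun f => Subtype.ext <| funext fun p => by
    simp [constMul_apply, ← mul_assoc, he.mul_self]
  clifford_anticomm i j hij := LinearMap.ext fun f => Subtype.ext <| funext fun p => by
    simp [constMul_apply, ← mul_assoc, ← add_mul, he i j, hij]
  comm_clifford_coord i j := commute_constMul_coordMul _ _
  comm_clifford_deriv i j := commute_constMul_dirDeriv _ _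
  comm_coord i j := commute_coordMul _ _
  comm_deriv i j := commute_dirDeriv _ _
  deriv_mul_coord i j := by
    simp only [Function.comp_apply]
    rw [dirDeriv_mul_coordMul, hℓ]
    split_ifs <;> simp

theorem dotProduct_apply {ι : Type*} [Fintype ι] (a b : ι → Module.End ℝ (smoothMaps V F))
    (f : smoothMaps V F) (p : V) :
    ((a ⬝ᵥ b) f : V → F) p = ∑ i, (a i (b i f) : V → F) p := by
  simp [dotProduct]

theorem constMul_dotProduct_coordMul_apply {m : ℕ} (e : Fin m → A) (ℓ : Fin m → V →L[ℝ] ℝ)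
    (f : smoothMaps V A) (p : V) :
    ((constMul ∘ e ⬝ᵥ coordMul ∘ ℓ) f : V → A) p = emb e (fun j => ℓ j p) * (f : V → A) p := by
  simp [dotProduct_apply, constMul_apply, coordMul_apply, emb, Finset.sum_mul]

end smoothMaps

end SmoothMaps

namespace IsHomPoly

section Algebra

variable {m k : ℕ} {E : Type*} [AddCommGroup E] [Module ℝ E] {q : (Fin m → ℝ) → E}

theorem map_smul (hq : IsHomPoly k q) (t : ℝ) (u : Fin m → ℝ) : q (t • u) = t ^ k • q u := by
  induction hq using Submodule.span_induction with
  | mem q hq =>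
    obtain ⟨α, c, rfl, rfl⟩ := hq
    simp [mul_pow, Finset.prod_mul_distrib, Finset.prod_pow_eq_pow_sum, mul_smul]
  | zero => simp
  | add _ _ _ _ h₁ h₂ => simp [h₁, h₂]
  | smul c _ _ h => simp [h, smul_comm c]

theorem map {E' : Type*} [AddCommGroup E'] [Module ℝ E'] {l : ℕ}
    (T : ((Fin m → ℝ) → E) →ₗ[ℝ] (Fin m → ℝ) → E')
    (hT : ∀ (α : Fin m → ℕ) (c : E), ∑ i, α i = k →
      IsHomPoly l (T fun x => (∏ i, x i ^ α i) • c))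
    (hq : IsHomPoly k q) : IsHomPoly l (T q) := by
  refine (Submodule.span_le (p := (Submodule.span ℝ _).comap T)).2 ?_ hq
  rintro _ ⟨α, c, hα, rfl⟩
  exact hT α c hα

theorem coord_smul (hq : IsHomPoly k q) (j : Fin m) :
    IsHomPoly (k + 1) fun u => u j • q u := by
  let T : ((Fin m → ℝ) → E) →ₗ[ℝ] (Fin m → ℝ) → E := .pi fun u => u j • .proj u
  refine hq.map T fun α c hα => ?_
  refine Submodule.subset_span ⟨α + Pi.single j 1, c, ?_, funext fun u => ?_⟩
  · simp [Finset.sum_add_distrib, hα]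
  · simp only [Pi.add_apply, pow_add, Finset.prod_mul_distrib]
    simp [T, Pi.single_apply, smul_smul, mul_comm]

variable {A : Type*} [Ring A] [Algebra ℝ A]

theorem const_mul {q : (Fin m → ℝ) → A} (hq : IsHomPoly k q) (a : A) :
    IsHomPoly k fun u => a * q u :=
  hq.map ((LinearMap.mulLeft ℝ a).compLeft (Fin m → ℝ)) fun α c hα =>
    Submodule.subset_span ⟨α, a * c, hα, funext fun _ => mul_smul_comm _ a c⟩

theorem emb_mul {q : (Fin m → ℝ) → A} (hq : IsHomPoly k q) (e : Fin m → A) :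
    IsHomPoly (k + 1) fun u => emb e u * q u := by
  have hsum : (fun u => emb e u * q u) = ∑ j, fun u => u j • (e j * q u) := by
    funext u
    simp [emb, Finset.sum_mul]
  rw [hsum]
  exact Submodule.sum_mem _ fun j _ => (hq.const_mul (e j)).coord_smul j

end Algebra

section Calculus

variable {m k : ℕ} {E : Type*} [NormedAddCommGroup E] [NormedSpace ℝ E] {q : (Fin m → ℝ) → E}

theorem contDiff (hq : IsHomPoly k q) : ContDiff ℝ ∞ q := by
  induction hq using Submodule.span_induction with
  | mem q hq =>
    obtain ⟨α, c, -, rfl⟩ := hq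
    exact (contDiff_prod fun i _ => (contDiff_apply ℝ ℝ i).pow (α i)).smul contDiff_const
  | zero => exact contDiff_const
  | add _ _ _ _ h₁ h₂ => exact h₁.add h₂
  | smul c _ _ h => exact h.const_smul c

theorem fderiv_apply_self (hq : IsHomPoly k q) (u : Fin m → ℝ) :
    fderiv ℝ q u u = (k : ℝ) • q u := by
  have hchain : HasDerivAt (fun t : ℝ => q (t • u)) (fderiv ℝ q u u) 1 := by
    have hd : HasFDerivAt q (fderiv ℝ q u) ((1 : ℝ) • u) := by
      rw [one_smul]
      exact (hq.contDiff.differentiable (by simp) u).hasFDerivAt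
    simpa [Function.comp_def] using
      hd.comp_hasDerivAt (1 : ℝ) ((hasDerivAt_id (1 : ℝ)).smul_const u)
  have hpow : HasDerivAt (fun t : ℝ => q (t • u)) ((k : ℝ) • q u) 1 := by
    simp only [hq.map_smul]
    simpa using (hasDerivAt_pow k (1 : ℝ)).smul_const (q u)
  exact hchain.unique hpow

theorem sum_smul_pd (hq : IsHomPoly k q) (u : Fin m → ℝ) :
    ∑ j, u j • pd j q u = (k : ℝ) • q u := by
  rw [← hq.fderiv_apply_self]
  conv_rhs => rw [← Finset.univ_sum_single u, map_sum, Finset.univ_sum_single u]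
  refine Finset.sum_congr rfl fun j _ => ?_
  rw [pd, ← _root_.map_smul, ← Pi.single_smul, smul_eq_mul, mul_one]

end Calculus

end IsHomPoly

/-- Membership in the space `H_k` of harmonic polynomials homogeneous of degree `k`. -/
def IsHarmonicPoly {m : ℕ} {E : Type*} [NormedAddCommGroup E] [NormedSpace ℝ E] (k : ℕ)
    (q : (Fin m → ℝ) → E) : Prop :=
  IsHomPoly k q ∧ lap q = 0

section Monogenic

open smoothMaps

variable {m k : ℕ} {Cl : Type*} [NormedRing Cl] [NormedAlgebra ℝ Cl] {e : Fin m → Cl}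

theorem CliffordRel.isCliffordWeyl_pd (he : CliffordRel e) :
    IsCliffordWeyl (constMul (V := Fin m → ℝ) ∘ e) (coordMul ∘ ContinuousLinearMap.proj)
      (dirDeriv ∘ fun j => Pi.single j 1) :=
  isCliffordWeyl he fun i j => by simp [Pi.single_apply, eq_comm]

theorem coe_dirac (e : Fin m → Cl) (f : smoothMaps (Fin m → ℝ) Cl) :
    ((constMul ∘ e ⬝ᵥ dirDeriv ∘ fun j => Pi.single j 1) f : (Fin m → ℝ) → Cl) = dirac e f :=
  funext (dotProduct_apply _ _ f)

theorem coe_lap (f : smoothMaps (Fin m → ℝ) Cl) :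
    (((dirDeriv ∘ fun j => Pi.single j 1) ⬝ᵥ dirDeriv ∘ fun j => Pi.single j 1) f :
      (Fin m → ℝ) → Cl) = lap f :=
  funext (dotProduct_apply _ _ f)

variable {q : (Fin m → ℝ) → Cl}

theorem lap_eq_zero_of_dirac_eq_zero (he : CliffordRel e) (hq : ContDiff ℝ ∞ q)
    (hD : dirac e q = 0) : lap q = 0 := by
  let f : smoothMaps (Fin m → ℝ) Cl := ⟨q, hq⟩
  have hDf : (constMul ∘ e ⬝ᵥ dirDeriv ∘ fun j => Pi.single j 1) f = 0 :=
    Subtype.ext ((coe_dirac e f).trans hD)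
  have hΔf := LinearMap.congr_fun he.isCliffordWeyl_pd.dirac_mul_dirac f
  rw [Module.End.mul_apply, hDf, map_zero, LinearMap.neg_apply, zero_eq_neg] at hΔf
  exact (coe_lap f).symm.trans (congrArg Subtype.val hΔf)

theorem lap_emb_mul_eq_zero (he : CliffordRel e) (hq : ContDiff ℝ ∞ q) (hD : dirac e q = 0) :
    lap (fun u => emb e u * q u) = 0 := by
  let f : smoothMaps (Fin m → ℝ) Cl := ⟨q, hq⟩
  let uf := (constMul ∘ e ⬝ᵥ coordMul ∘ ContinuousLinearMap.proj) f
  have huf : (uf : (Fin m → ℝ) → Cl) = fun u => emb e u * q u :=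
    funext (constMul_dotProduct_coordMul_apply e _ f)
  have hDf : (constMul ∘ e ⬝ᵥ dirDeriv ∘ fun j => Pi.single j 1) f = 0 :=
    Subtype.ext ((coe_dirac e f).trans hD)
  have hΔf : ((dirDeriv ∘ fun j => Pi.single j 1) ⬝ᵥ dirDeriv ∘ fun j => Pi.single j 1) f = 0 :=
    Subtype.ext ((coe_lap f).trans (lap_eq_zero_of_dirac_eq_zero he hq hD))
  have hΔuf := LinearMap.congr_fun he.isCliffordWeyl_pd.laplacian_mul_vector f
  rw [LinearMap.add_apply, Module.End.mul_apply, Module.End.mul_apply, Module.End.mul_apply, hDf,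
    hΔf, map_zero, map_zero, add_zero] at hΔuf
  rw [← huf, ← coe_lap, hΔuf]
  rfl

theorem IsHomPoly.isHarmonicPoly (hq : IsHomPoly k q) (he : CliffordRel e)
    (hD : dirac e q = 0) : IsHarmonicPoly k q :=
  ⟨hq, lap_eq_zero_of_dirac_eq_zero he hq.contDiff hD⟩

theorem IsHomPoly.isHarmonicPoly_emb_mul (hq : IsHomPoly k q) (he : CliffordRel e)
    (hD : dirac e q = 0) : IsHarmonicPoly (k + 1) fun u => emb e u * q u :=
  ⟨hq.emb_mul e, lap_emb_mul_eq_zero he hq.contDiff hD⟩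

end Monogenic

section Fields

open smoothMaps

/-- The space of smooth fields `f(x, u)` in a position variable `x` and a spin variable `u` in
`ℝ^m`, in uncurried form. -/
noncomputable abbrev smoothFields (m : ℕ) (F : Type*) [NormedAddCommGroup F] [NormedSpace ℝ F] :
    Submodule ℝ ((Fin m → ℝ) × (Fin m → ℝ) → F) :=
  smoothMaps ((Fin m → ℝ) × (Fin m → ℝ)) F

variable {m k : ℕ} {F Cl : Type*} [NormedAddCommGroup F] [NormedSpace ℝ F] [NormedRing Cl]
  [NormedAlgebra ℝ Cl]

/-- The field `x ↦ (u ↦ f(x, u))` in the curried form used by the operators `diracx`, `PpU`, … -/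
def curryField : smoothFields m F →ₗ[ℝ] (Fin m → ℝ) → (Fin m → ℝ) → F where
  toFun f := Function.curry f.1
  map_add' _ _ := rfl
  map_smul' _ _ := rfl

/-- Multiplication by the coordinates `u_j` of the spin variable. -/
noncomputable def coordU : Fin m → Module.End ℝ (smoothFields m F) :=
  coordMul ∘ fun j => .proj j ∘L .snd ℝ _ _

/-- The partial derivatives `∂/∂x_j` on smooth fields. -/
noncomputable def derivX : Fin m → Module.End ℝ (smoothFields m F) :=
  dirDeriv ∘ fun j => (Pi.single j 1, 0)

/-- The partial derivatives `∂/∂u_j` on smooth fields. -/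
noncomputable def derivU : Fin m → Module.End ℝ (smoothFields m F) :=
  dirDeriv ∘ fun j => (0, Pi.single j 1)

/-- The Dirac operator `D_x` on smooth fields. -/
noncomputable def diracX (e : Fin m → Cl) : Module.End ℝ (smoothFields m Cl) :=
  constMul ∘ e ⬝ᵥ derivX

theorem curryField_derivX (j : Fin m) (f : smoothFields m F) :
    curryField (derivX j f) = pdx j (curryField f) := by
  funext x u
  have h : HasFDerivAt (fun y => curryField f y u) _ x :=
    (differentiable_coe f (x, u)).hasFDerivAt.comp x (hasFDerivAt_prodMk_left x u)
  rw [pdx, h.fderiv]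
  rfl

theorem curryField_derivU (j : Fin m) (f : smoothFields m F) :
    curryField (derivU j f) = pdu j (curryField f) := by
  funext x u
  have h : HasFDerivAt (curryField f x) _ u :=
    (differentiable_coe f (x, u)).hasFDerivAt.comp u (hasFDerivAt_prodMk_right x u)
  rw [pdu, h.fderiv]
  rfl

theorem curryField_dotProduct (a b : Fin m → Module.End ℝ (smoothFields m F))
    (f : smoothFields m F) (x u : Fin m → ℝ) :
    curryField ((a ⬝ᵥ b) f) x u = ∑ j, curryField (a j (b j f)) x u :=
  dotProduct_apply a b f (x, u)

theorem curryField_diracX (e : Fin m → Cl) (f : smoothFields m Cl) :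
    curryField (diracX e f) = diracx e (curryField f) := by
  funext x u
  simp only [diracx, ← curryField_derivX]
  exact curryField_dotProduct _ _ f x u

theorem curryField_vector_mul_dirac (e : Fin m → Cl) (f : smoothFields m Cl) :
    curryField ((constMul ∘ e ⬝ᵥ coordU * constMul ∘ e ⬝ᵥ derivU) f)
      = fun x u => emb e u * diracu e (curryField f) x u := by
  funext x u
  simp only [diracu, ← curryField_derivU]
  refine (constMul_dotProduct_coordMul_apply e _ _ (x, u)).trans ?_
  exact congrArg (emb e u * ·) (curryField_dotProduct _ _ f x u)

theorem CliffordRel.isCliffordWeyl_pdu {e : Fin m → Cl} (he : CliffordRel e) :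
    IsCliffordWeyl (constMul ∘ e) coordU derivU :=
  isCliffordWeyl he fun i j => by simp [Pi.single_apply, eq_comm]

theorem commute_coordU_diracX (e : Fin m → Cl) (j : Fin m) : Commute (coordU j) (diracX e) :=
  commute_dotProduct (fun _ => (commute_constMul_coordMul _ _).symm) fun _ =>
    commute_coordMul_dirDeriv rfl

theorem commute_derivU_diracX (e : Fin m → Cl) (j : Fin m) : Commute (derivU j) (diracX e) :=
  commute_dotProduct (fun _ => (commute_constMul_dirDeriv _ _).symm) fun _ =>
    commute_dirDeriv _ _

/-- The space `C^∞(ℝ^m, H_k)` of smooth fields that are harmonic and homogeneous of degree `k` in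
the spin variable, homogeneity being expressed by Euler's equation. -/
noncomputable def harmonicFields (m k : ℕ) (F : Type*) [NormedAddCommGroup F] [NormedSpace ℝ F] :
    Submodule ℝ (smoothFields m F) :=
  IsCliffordWeyl.harmonics coordU derivU (k : ℝ)

theorem mem_harmonicFields {f : smoothFields m F}
    (hf : ∀ x, IsHarmonicPoly k (curryField f x)) :
    f ∈ harmonicFields m k F := by
  refine IsCliffordWeyl.mem_harmonics.2 ⟨Subtype.ext <| funext fun ⟨x, u⟩ => ?_,
    Subtype.ext <| funext fun ⟨x, u⟩ => ?_⟩
  · have h := (hf x).1.sum_smul_pd u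
    refine (curryField_dotProduct _ _ f x u).trans (Eq.trans ?_ h)
    refine Finset.sum_congr rfl fun j _ => ?_
    exact congrArg (u j • ·) (congrFun₂ (curryField_derivU j f) x u)
  · refine (curryField_dotProduct _ _ f x u).trans (Eq.trans ?_ (congrFun (hf x).2 u))
    simp only [curryField_derivU]
    rfl

theorem diracX_mem_harmonicFields (e : Fin m → Cl) :
    ∀ f ∈ harmonicFields m k Cl, diracX e f ∈ harmonicFields m k Cl := fun _ =>
  IsCliffordWeyl.apply_mem_harmonics
    (commute_dotProduct (fun j => (commute_coordU_diracX e j).symm)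
      fun j => (commute_derivU_diracX e j).symm).symm
    (commute_dotProduct (fun j => (commute_derivU_diracX e j).symm)
      fun j => (commute_derivU_diracX e j).symm).symm

end Fields

section Factorization

open smoothMaps

open scoped Matrix.Module

variable {m k : ℕ} {Cl : Type*} [NormedRing Cl] [NormedAlgebra ℝ Cl] {e : Fin m → Cl}

/-- The space `C^∞(ℝ^m, H_k)` as a type of its own: instance search on its endomorphism ring and on
pairs of fields is too slow through the nested submodules of `harmonicFields`. -/
def HarmonicField (m k : ℕ) (Cl : Type*) [NormedRing Cl] [NormedAlgebra ℝ Cl] : Type _ :=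
  harmonicFields m k Cl

namespace HarmonicField

noncomputable instance : AddCommGroup (HarmonicField m k Cl) :=
  inferInstanceAs (AddCommGroup (harmonicFields m k Cl))

noncomputable instance : Module ℝ (HarmonicField m k Cl) :=
  inferInstanceAs (Module ℝ (harmonicFields m k Cl))

end HarmonicField

/-- The Dirac operator `D_x` as an endomorphism of `C^∞(ℝ^m, H_k)`. -/
noncomputable def diracXHarmonic (e : Fin m → Cl) (k : ℕ) :
    Module.End ℝ (HarmonicField m k Cl) :=
  (diracX e).restrict (diracX_mem_harmonicFields e)

/-- The projection `P_k^-` as an endomorphism of `C^∞(ℝ^m, H_k)`. -/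
noncomputable def projMinusU (he : CliffordRel e) (k : ℕ) :
    Module.End ℝ (HarmonicField m k Cl) :=
  he.isCliffordWeyl_pdu.projMinus (k : ℝ)

/-- The field `x ↦ (u ↦ f(x, u))` of an element of `C^∞(ℝ^m, H_k)`. -/
noncomputable def curryHarmonic :
    HarmonicField m k Cl →ₗ[ℝ] (Fin m → ℝ) → (Fin m → ℝ) → Cl :=
  curryField ∘ₗ (harmonicFields m k Cl).subtype

theorem diracx_curryHarmonic (g : HarmonicField m k Cl) :
    diracx e (curryHarmonic g) = curryHarmonic (diracXHarmonic e k g) :=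
  (curryField_diracX e g.1).symm

theorem PmU_curryHarmonic (he : CliffordRel e) (g : HarmonicField m k Cl) :
    PmU e k (curryHarmonic g) = curryHarmonic (projMinusU he k g) := by
  have h : curryHarmonic (projMinusU he k g) =
      curryField (-((Fintype.card (Fin m) : ℝ) + 2 * k - 2)⁻¹ •
        (constMul ∘ e ⬝ᵥ coordU * constMul ∘ e ⬝ᵥ derivU) g.1) := rfl
  rw [h, Fintype.card_fin, map_smul, curryField_vector_mul_dirac, neg_smul]
  rfl

theorem PpU_curryHarmonic (he : CliffordRel e) (g : HarmonicField m k Cl) :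
    PpU e k (curryHarmonic g) = curryHarmonic ((1 - projMinusU he k) g) := calc
  PpU e k (curryHarmonic g) = curryHarmonic g - PmU e k (curryHarmonic g) :=
    funext₂ fun _ _ => (sub_neg_eq_add _ _).symm
  _ = curryHarmonic ((1 - projMinusU he k) g) := by
    rw [PmU_curryHarmonic he, ← map_sub]
    rfl

/-- The operator matrix `D₁` on pairs of elements of `C^∞(ℝ^m, H_k)`. -/
noncomputable def harmonicFirstOrderMatrix (he : CliffordRel e) (k : ℕ) :
    Matrix (Fin 2) (Fin 2) (Module.End ℝ (HarmonicField m k Cl)) :=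
  firstOrderMatrix ((m : ℝ) + 2 * k) (projMinusU he k) (diracXHarmonic e k)

/-- The operator matrix `D₂` on pairs of elements of `C^∞(ℝ^m, H_k)`. -/
noncomputable def harmonicSecondOrderMatrix (he : CliffordRel e) (k : ℕ) :
    Matrix (Fin 2) (Fin 2) (Module.End ℝ (HarmonicField m k Cl)) :=
  secondOrderMatrix ((m : ℝ) + 2 * k) (projMinusU he k) (diracXHarmonic e k)

theorem D1fst_curryHarmonic (he : CliffordRel e) (v : Fin 2 → HarmonicField m k Cl) :
    D1fst e k (curryHarmonic (v 0)) (curryHarmonic (v 1))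
      = curryHarmonic ((harmonicFirstOrderMatrix he k • v) 0) := by
  funext x u
  simp only [D1fst, PpDx, PmDx, PpU_curryHarmonic he, PmU_curryHarmonic he, diracx_curryHarmonic]
  rw [Matrix.Module.smul_apply, Fin.sum_univ_two, map_add]
  rfl

theorem D1snd_curryHarmonic (he : CliffordRel e) (v : Fin 2 → HarmonicField m k Cl) :
    D1snd e k (curryHarmonic (v 0)) (curryHarmonic (v 1))
      = curryHarmonic ((harmonicFirstOrderMatrix he k • v) 1) := by
  funext x u
  simp only [D1snd, PpDx, PmDx, PpU_curryHarmonic he, PmU_curryHarmonic he, diracx_curryHarmonic]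
  rw [Matrix.Module.smul_apply, Fin.sum_univ_two, map_add]
  rfl

theorem D1Tfst_curryHarmonic (he : CliffordRel e) (v : Fin 2 → HarmonicField m k Cl) :
    D1Tfst e k (curryHarmonic (v 0)) (curryHarmonic (v 1))
      = curryHarmonic (((harmonicFirstOrderMatrix he k).transpose • v) 0) := by
  funext x u
  simp only [D1Tfst, PpDx, PpU_curryHarmonic he, PmU_curryHarmonic he, diracx_curryHarmonic]
  rw [Matrix.Module.smul_apply, Fin.sum_univ_two, map_add]
  rfl

theorem D1Tsnd_curryHarmonic (he : CliffordRel e) (v : Fin 2 → HarmonicField m k Cl) :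
    D1Tsnd e k (curryHarmonic (v 0)) (curryHarmonic (v 1))
      = curryHarmonic (((harmonicFirstOrderMatrix he k).transpose • v) 1) := by
  funext x u
  simp only [D1Tsnd, PmDx, PpU_curryHarmonic he, PmU_curryHarmonic he, diracx_curryHarmonic]
  rw [Matrix.Module.smul_apply, Fin.sum_univ_two, map_add]
  rfl

theorem D2fst_curryHarmonic (he : CliffordRel e) (v : Fin 2 → HarmonicField m k Cl) :
    D2fst e k (curryHarmonic (v 0)) (curryHarmonic (v 1))
      = curryHarmonic ((harmonicSecondOrderMatrix he k • v) 0) := by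
  funext x u
  simp only [D2fst, PpDx, PpU_curryHarmonic he, PmU_curryHarmonic he, diracx_curryHarmonic]
  rw [Matrix.Module.smul_apply, Fin.sum_univ_two, map_add, sub_eq_add_neg, ← neg_smul]
  rfl

theorem D2snd_curryHarmonic (he : CliffordRel e) (v : Fin 2 → HarmonicField m k Cl) :
    D2snd e k (curryHarmonic (v 0)) (curryHarmonic (v 1))
      = curryHarmonic ((harmonicSecondOrderMatrix he k • v) 1) := by
  funext x u
  simp only [D2snd, PmDx, PpU_curryHarmonic he, PmU_curryHarmonic he, diracx_curryHarmonic]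
  rw [Matrix.Module.smul_apply, Fin.sum_univ_two, map_add]
  rfl

theorem harmonicFirstOrderMatrix_smul_transpose_smul (he : CliffordRel e) (hmk : 4 < m + 2 * k)
    (v : Fin 2 → HarmonicField m k Cl) :
    harmonicFirstOrderMatrix he k • (harmonicFirstOrderMatrix he k).transpose • v
      = harmonicSecondOrderMatrix he k • v := by
  have hc : (4 : ℝ) < m + 2 * k := mod_cast hmk
  have hne : (Fintype.card (Fin m) + 2 * k - 2 : ℝ) ≠ 0 := by
    rw [Fintype.card_fin]
    linarith
  exact firstOrderMatrix_smul_transpose_smul hc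
    (he.isCliffordWeyl_pdu.isIdempotentElem_projMinus hne) _ v

end Factorization

theorem stmt13_general {m k : ℕ} (hmk : 4 < m + 2 * k) {Cl : Type*} [NormedRing Cl]
    [NormedAlgebra ℝ Cl] {e : Fin m → Cl} (he : CliffordRel e)
    (f₁ f₂ : (Fin m → ℝ) → (Fin m → ℝ) → Cl)
    (hf₁ : ContDiff ℝ ∞ fun p : (Fin m → ℝ) × (Fin m → ℝ) => f₁ p.1 p.2)
    (hf₂ : ContDiff ℝ ∞ fun p : (Fin m → ℝ) × (Fin m → ℝ) => f₂ p.1 p.2)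
    (hf₁H : ∀ x, IsHarmonicPoly k (f₁ x))
    (hf₂H : ∀ x, IsHarmonicPoly k (f₂ x)) :
    (∀ x u, D1fst e k (D1Tfst e k f₁ f₂) (D1Tsnd e k f₁ f₂) x u = D2fst e k f₁ f₂ x u) ∧
      (∀ x u, D1snd e k (D1Tfst e k f₁ f₂) (D1Tsnd e k f₁ f₂) x u = D2snd e k f₁ f₂ x u) := by
  let v : Fin 2 → HarmonicField m k Cl :=
    ![⟨⟨_, hf₁⟩, mem_harmonicFields hf₁H⟩, ⟨⟨_, hf₂⟩, mem_harmonicFields hf₂H⟩]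
  have h₁ : f₁ = curryHarmonic (v 0) := rfl
  have h₂ : f₂ = curryHarmonic (v 1) := rfl
  rw [h₁, h₂, D1Tfst_curryHarmonic he, D1Tsnd_curryHarmonic he, D1fst_curryHarmonic he,
    D1snd_curryHarmonic he, D2fst_curryHarmonic he, D2snd_curryHarmonic he,
    harmonicFirstOrderMatrix_smul_transpose_smul he hmk]
  exact ⟨fun _ _ => rfl, fun _ _ => rfl⟩

/-- **Factorization `D₂ = D₁ D₁ᵀ`.** For `m ≥ 3`, `k ≥ 1`, the 2×2 operator
matrix `D₁` with entries `D₁[1,1] = −R_k P_k^+`, `D₁[1,2] = 2 T_k^* P_k^+ / √(c(c−4))`,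
`D₁[2,1] = 2 T_k P_k^- / (c−4)`, `D₁[2,2] = √(c/(c−4)) Q_k P_k^-` (`c = m+2k`) satisfies
`D₁ D₁ᵀ = D₂`, where `D₂[1,1] = R_k² P_k^+`, `D₂[1,2] = −2 R_k T_k P_k^- /(c−4)`,
`D₂[2,1] = 2 Q_k T_k^* P_k^+/(c−4)`, `D₂[2,2] = (c/(c−4)) Q_k² P_k^-`: for all smooth
`f₁ ∈ C^∞(ℝ^m, M_k)`, `f₂ ∈ C^∞(ℝ^m, uM_{k-1})`, applying `D₁ᵀ` and then `D₁`
componentwise to the pair `(f₁, f₂)` yields the same pair as applying `D₂`. -/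
theorem stmt13 {m k : ℕ} (hm : 3 ≤ m) (hk : 1 ≤ k) {Cl : Type*} [NormedRing Cl]
    [NormedAlgebra ℝ Cl] (e : Fin m → Cl) (hrel : CliffordRel e)
    (f₁ f₂ : (Fin m → ℝ) → (Fin m → ℝ) → Cl)
    (hf₁ : ContDiff ℝ (⊤ : ℕ∞) (fun p : (Fin m → ℝ) × (Fin m → ℝ) => f₁ p.1 p.2))
    (hf₂ : ContDiff ℝ (⊤ : ℕ∞) (fun p : (Fin m → ℝ) × (Fin m → ℝ) => f₂ p.1 p.2))
    (hf₁M : ∀ x, IsHomPoly k (f₁ x) ∧ dirac e (f₁ x) = 0)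
    (hf₂M : ∀ x, ∃ q : (Fin m → ℝ) → Cl, IsHomPoly (k - 1) q ∧ dirac e q = 0 ∧
      f₂ x = fun u => emb e u * q u) :
    (∀ x u, D1fst e k (D1Tfst e k f₁ f₂) (D1Tsnd e k f₁ f₂) x u = D2fst e k f₁ f₂ x u) ∧
      (∀ x u, D1snd e k (D1Tfst e k f₁ f₂) (D1Tsnd e k f₁ f₂) x u = D2snd e k f₁ f₂ x u) :=
  stmt13_general (by omega) hrel f₁ f₂ hf₁ hf₂
    (fun x => (hf₁M x).1.isHarmonicPoly hrel (hf₁M x).2)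
    fun x => let ⟨_, hq, hD, h⟩ := hf₂M x
      h ▸ Nat.sub_add_cancel hk ▸ hq.isHarmonicPoly_emb_mul hrel hD
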